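/- Let x = 0. The uncertain transfer function value T(θ) = (e + Z_N·θ)/(1 + Z_D·θ) is {0,y,z}-dissipative (i.e. 2Re(conj(y)·T(θ)) + z ≤ 0) for every θ in the ellipsoid U if and only if there exist a real scalar ξ ≥ 0 and a real skew-symmetric matrix 𝒳 ∈ ℝ^{(n+1)×(n+1)} such that the Hermitian (n+1)×(n+1) complex matrix A₂*·y + conj(y)·A₂ + z·A₁ − ξ·B + i𝒳 is negative semidefinite. -/

import Mathlib

open Matrix
open scoped ComplexOrder

/-- A complex number `Δ` is `{x,y,z}`-dissipative if `x|Δ|² + 2Re(conj(y)·Δ) + z ≤ 0`. -/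
def Dissipative (x : ℝ) (y : ℂ) (z : ℝ) (Δ : ℂ) : Prop :=
  x * Complex.normSq Δ + 2 * (starRingEnd ℂ y * Δ).re + z ≤ 0

/-- The transfer function value `T(θ) = (e + Z_N·θ)/(1 + Z_D·θ)`. -/
noncomputable def Tval {n : ℕ} (e : ℂ) (ZN ZD : Fin n → ℂ) (θ : Fin n → ℝ) : ℂ :=
  (e + ∑ i, ZN i * (θ i : ℂ)) / (1 + ∑ i, ZD i * (θ i : ℂ))

/-- The ellipsoid `U = {θ ∈ ℝⁿ : (θ−θ̂)ᵀP⁻¹(θ−θ̂) < χ}`. -/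
noncomputable def ellipsoid {n : ℕ} (P : Matrix (Fin n) (Fin n) ℝ) (θhat : Fin n → ℝ)
    (χ : ℝ) : Set (Fin n → ℝ) :=
  {θ | (θ - θhat) ⬝ᵥ P⁻¹ *ᵥ (θ - θhat) < χ}

/-- The Hermitian matrix `A₁ = [[Z_D*Z_D, Z_D*],[Z_D, 1]] ∈ ℂ^{(n+1)×(n+1)}`. -/
def A1mat {n : ℕ} (ZD : Fin n → ℂ) : Matrix (Fin n ⊕ Unit) (Fin n ⊕ Unit) ℂ :=
  Matrix.fromBlocks
    (Matrix.of fun i j => starRingEnd ℂ (ZD i) * ZD j)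
    (Matrix.of fun i _ => starRingEnd ℂ (ZD i))
    (Matrix.of fun _ j => ZD j)
    (Matrix.of fun _ _ => 1)

/-- The matrix `A₂ = [[Z_D*Z_N, Z_D*e],[Z_N, e]] ∈ ℂ^{(n+1)×(n+1)}`. -/
def A2mat {n : ℕ} (e : ℂ) (ZN ZD : Fin n → ℂ) : Matrix (Fin n ⊕ Unit) (Fin n ⊕ Unit) ℂ :=
  Matrix.fromBlocks
    (Matrix.of fun i j => starRingEnd ℂ (ZD i) * ZN j)
    (Matrix.of fun i _ => starRingEnd ℂ (ZD i) * e)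
    (Matrix.of fun _ j => ZN j)
    (Matrix.of fun _ _ => e)

/-- The real symmetric matrix `B = [[P⁻¹, −P⁻¹θ̂],[−θ̂ᵀP⁻¹, θ̂ᵀP⁻¹θ̂ − χ]]`. -/
noncomputable def Bmat {n : ℕ} (P : Matrix (Fin n) (Fin n) ℝ) (θhat : Fin n → ℝ) (χ : ℝ) :
    Matrix (Fin n ⊕ Unit) (Fin n ⊕ Unit) ℝ :=
  Matrix.fromBlocks P⁻¹
    (Matrix.of fun i _ => -(P⁻¹ *ᵥ θhat) i)
    (Matrix.of fun _ j => -(θhat ᵥ* P⁻¹) j)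
    (Matrix.of fun _ _ => θhat ⬝ᵥ P⁻¹ *ᵥ θhat - χ)

lemma slemma_aux {V : Type*} [AddCommGroup V] [Module ℝ V] (Q B : V → ℝ)
    (hQ : ∀ u v, ∃ c : ℝ, ∀ s : ℝ, Q (u + s • v) = Q u + s * c + s ^ 2 * Q v)
    (hB : ∀ u v, ∃ c : ℝ, ∀ s : ℝ, B (u + s • v) = B u + s * c + s ^ 2 * B v)
    (h : ∀ v, B v < 0 → Q v ≤ 0) (v₀ : V) (hv₀ : B v₀ < 0) :
    ∃ ξ : ℝ, 0 ≤ ξ ∧ ∀ v, Q v ≤ ξ * B v := by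
  have h0 : ∀ u, B u = 0 → Q u ≤ 0 := by
    intro u hu
    obtain ⟨c, hc⟩ := hQ u v₀
    obtain ⟨b, hb⟩ := hB u v₀
    have key : ∀ σ : ℝ, σ * b ≤ 0 → σ ^ 2 = 1 → Q u ≤ 0 := by
      intro σ hσ hσ1
      have hs : ∀ s : ℝ, 0 < s → Q u + (s * σ) * c + (s * σ) ^ 2 * Q v₀ ≤ 0 := by
        intro s hs
        rw [← hc]
        apply h
        rw [hb, hu, mul_pow, hσ1]
        have h1 : s * (σ * b) ≤ 0 := mul_nonpos_of_nonneg_of_nonpos hs.le hσ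
        have h2 : s ^ 2 * B v₀ < 0 := mul_neg_of_pos_of_neg (by positivity) hv₀
        nlinarith
      have ht : Filter.Tendsto (fun s : ℝ => Q u + (s * σ) * c + (s * σ) ^ 2 * Q v₀)
          (nhdsWithin 0 (Set.Ioi 0)) (nhds (Q u)) := by
        have : Continuous (fun s : ℝ => Q u + (s * σ) * c + (s * σ) ^ 2 * Q v₀) := by fun_prop
        have h3 := (this.tendsto 0).mono_left (nhdsWithin_le_nhds (s := Set.Ioi 0))
        simpa using h3
      refine le_of_tendsto ht ?_
      filter_upwards [self_mem_nhdsWithin] with s hs'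
      exact hs s hs'
    rcases le_total b 0 with hb0 | hb0
    · exact key 1 (by linarith) (by norm_num)
    · exact key (-1) (by linarith) (by norm_num)
  have hcross : ∀ v w, B v < 0 → 0 < B w → Q w / B w ≤ Q v / B v := by
    intro v w hv hw
    obtain ⟨c, hc⟩ := hQ w v
    obtain ⟨b, hb⟩ := hB w v
    have hab : B v * B w < 0 := mul_neg_of_neg_of_pos hv hw
    have hD : 0 ≤ b ^ 2 - 4 * B v * B w := by nlinarith [sq_nonneg b]
    obtain ⟨r, hr0, hr⟩ : ∃ r : ℝ, 0 < r ∧ r ^ 2 = b ^ 2 - 4 * B v * B w :=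
      ⟨√(b ^ 2 - 4 * B v * B w), Real.sqrt_pos.2 (by nlinarith [sq_nonneg b]), Real.sq_sqrt hD⟩
    have ha : B v ≠ 0 := hv.ne
    obtain ⟨s1, hs1⟩ : ∃ s, s = (-b + r) / (2 * B v) := ⟨_, rfl⟩
    obtain ⟨s2, hs2⟩ : ∃ s, s = (-b - r) / (2 * B v) := ⟨_, rfl⟩
    have e1 : B w + s1 * b + s1 ^ 2 * B v = 0 := by
      rw [hs1]; field_simp; linear_combination hr
    have e2 : B w + s2 * b + s2 ^ 2 * B v = 0 := by
      rw [hs2]; field_simp; linear_combination hr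
    have ep : s1 * s2 = B w / B v := by
      rw [hs1, hs2]; field_simp; linear_combination -hr
    have ed : 0 < s2 - s1 := by
      have : s2 - s1 = r / (- B v) := by rw [hs1, hs2]; field_simp; ring
      rw [this]; exact div_pos hr0 (by linarith)
    have epn : s1 * s2 < 0 := by rw [ep]; exact div_neg_of_pos_of_neg hw hv
    have hs1n : s1 < 0 := by nlinarith
    have hs2p : 0 < s2 := by nlinarith
    have q1 := h0 (w + s1 • v) (by rw [hb, e1])
    have q2 := h0 (w + s2 • v) (by rw [hb, e2])
    rw [hc] at q1 q2
    have hfin : (s2 - s1) * (Q w - s1 * s2 * Q v) ≤ 0 := by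
      have := mul_nonpos_of_nonneg_of_nonpos hs2p.le q1
      have := mul_nonpos_of_nonneg_of_nonpos (neg_pos.2 hs1n).le q2
      nlinarith
    have hfin2 : Q w ≤ s1 * s2 * Q v := by
      by_contra hcon
      have := mul_pos ed (sub_pos.2 (not_le.1 hcon))
      linarith
    rw [div_le_iff₀ hw]
    rw [ep] at hfin2
    calc _ ≤ _ := hfin2
      _ = _ := by ring
  have hneg : ∀ v, B v < 0 → 0 ≤ Q v / B v := fun v hv =>
    div_nonneg_of_nonpos (h v hv) hv.le
  let S : Set ℝ := insert 0 {r | ∃ w, 0 < B w ∧ r = Q w / B w}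
  have hub : ∀ v, B v < 0 → Q v / B v ∈ upperBounds S := by
    rintro v hv r (rfl | ⟨w, hw, rfl⟩)
    · exact hneg v hv
    · exact hcross v w hv hw
  have hbdd : BddAbove S := ⟨_, hub v₀ hv₀⟩
  refine ⟨sSup S, le_csSup hbdd (Set.mem_insert _ _), fun v => ?_⟩
  rcases lt_trichotomy (B v) 0 with hv | hv | hv
  · have := csSup_le (Set.insert_nonempty _ _) (hub v hv)
    rwa [le_div_iff_of_neg hv] at this
  · rw [hv, mul_zero]; exact h0 v hv
  · rw [← div_le_iff₀ hv]
    exact le_csSup hbdd (Set.mem_insert_of_mem _ ⟨v, hv, rfl⟩)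

lemma quad_expand {m : Type*} [Fintype m] (M : Matrix m m ℝ) (u v : m → ℝ) :
    ∃ c : ℝ, ∀ s : ℝ, (u + s • v) ⬝ᵥ M *ᵥ (u + s • v)
      = u ⬝ᵥ M *ᵥ u + s * c + s ^ 2 * (v ⬝ᵥ M *ᵥ v) := by
  refine ⟨u ⬝ᵥ M *ᵥ v + v ⬝ᵥ M *ᵥ u, fun s => ?_⟩
  simp only [mulVec_add, mulVec_smul, add_dotProduct, dotProduct_add, smul_dotProduct,
    dotProduct_smul, smul_eq_mul]
  ring

lemma B_form {n : ℕ} (P : Matrix (Fin n) (Fin n) ℝ) (θhat : Fin n → ℝ) (χ t : ℝ)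
    (θ : Fin n → ℝ) :
    (Sum.elim θ (fun _ : Unit => t)) ⬝ᵥ Bmat P θhat χ *ᵥ (Sum.elim θ (fun _ => t))
      = (θ - t • θhat) ⬝ᵥ P⁻¹ *ᵥ (θ - t • θhat) - χ * t ^ 2 := by
  have h1 : Bmat P θhat χ *ᵥ (Sum.elim θ (fun _ => t)) =
      Sum.elim (P⁻¹ *ᵥ θ - t • (P⁻¹ *ᵥ θhat))
        (fun _ => - ((θhat ᵥ* P⁻¹) ⬝ᵥ θ) + (θhat ⬝ᵥ P⁻¹ *ᵥ θhat - χ) * t) := by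
    rw [Bmat, fromBlocks_mulVec]
    congr 1
    · funext i
      simp [mulVec, dotProduct]
      ring
    · funext i
      simp [mulVec, dotProduct]
  rw [h1, sumElim_dotProduct_sumElim, ← dotProduct_mulVec]
  simp only [mulVec_sub, mulVec_smul, sub_dotProduct, dotProduct_sub, smul_dotProduct,
    dotProduct_smul, smul_eq_mul]
  simp [dotProduct]
  ring

/-- complexified vector -/
def cvec {m : Type*} (v : m → ℝ) : m → ℂ := fun i => (v i : ℂ)

lemma A2_form {n : ℕ} (e : ℂ) (ZN ZD : Fin n → ℂ) (t : ℝ) (θ : Fin n → ℝ) :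
    cvec (Sum.elim θ (fun _ : Unit => t)) ⬝ᵥ A2mat e ZN ZD *ᵥ cvec (Sum.elim θ (fun _ => t))
      = starRingEnd ℂ (t + ∑ i, ZD i * (θ i : ℂ)) * (e * t + ∑ i, ZN i * (θ i : ℂ)) := by
  have h : A2mat e ZN ZD = vecMulVec (Sum.elim (fun i => starRingEnd ℂ (ZD i)) (fun _ => 1))
      (Sum.elim ZN (fun _ => e)) := by
    ext (i | i) (j | j) <;> simp [A2mat, vecMulVec]
  rw [h, vecMulVec_mulVec, op_smul_eq_smul, dotProduct_smul, smul_eq_mul, mul_comm]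
  simp [dotProduct, cvec, mul_comm]
  ring

lemma A1_eq {n : ℕ} (ZD : Fin n → ℂ) : A1mat ZD = A2mat 1 ZD ZD := by
  ext (i | i) (j | j) <;> simp [A2mat, A1mat]

lemma cvec_re {m : Type*} [Fintype m] (M : Matrix m m ℂ) (v : m → ℝ) :
    (cvec v ⬝ᵥ M *ᵥ cvec v).re = v ⬝ᵥ (M.map Complex.re) *ᵥ v := by
  simp [dotProduct, mulVec, cvec]

/-- the Hermitian matrix without multipliers -/
noncomputable def Hmat {n : ℕ} (e : ℂ) (ZN ZD : Fin n → ℂ) (y : ℂ) (z : ℝ) :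
    Matrix (Fin n ⊕ Unit) (Fin n ⊕ Unit) ℂ :=
  y • (A2mat e ZN ZD)ᴴ + starRingEnd ℂ y • A2mat e ZN ZD + (z : ℂ) • A1mat ZD

lemma Hmat_herm {n : ℕ} (e : ℂ) (ZN ZD : Fin n → ℂ) (y : ℂ) (z : ℝ) :
    (Hmat e ZN ZD y z)ᴴ = Hmat e ZN ZD y z := by
  have : (A1mat ZD)ᴴ = A1mat ZD := by
    ext (i | i) (j | j) <;> simp [A1mat, mul_comm]
  simp [Hmat, this, conjTranspose_add, conjTranspose_smul]
  abel

lemma H_form {n : ℕ} (e : ℂ) (ZN ZD : Fin n → ℂ) (y : ℂ) (z : ℝ) (t : ℝ) (θ : Fin n → ℝ) :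
    Sum.elim θ (fun _ : Unit => t) ⬝ᵥ ((Hmat e ZN ZD y z).map Complex.re) *ᵥ
        Sum.elim θ (fun _ : Unit => t)
      = 2 * (starRingEnd ℂ y * (starRingEnd ℂ (t + ∑ i, ZD i * (θ i : ℂ)) *
          (e * t + ∑ i, ZN i * (θ i : ℂ)))).re
        + z * Complex.normSq (t + ∑ i, ZD i * (θ i : ℂ)) := by
  have hstar : ∀ v : Fin n ⊕ Unit → ℝ, cvec v ⬝ᵥ (A2mat e ZN ZD)ᴴ *ᵥ cvec v =
      starRingEnd ℂ (cvec v ⬝ᵥ (A2mat e ZN ZD) *ᵥ cvec v) := by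
    intro v
    have hv : star (cvec v) = cvec v := by funext i; simp [cvec]
    have := star_dotProduct (cvec v) ((A2mat e ZN ZD) *ᵥ cvec v)
    rw [starRingEnd_apply, ← star_dotProduct_star, star_mulVec, hv, ← dotProduct_mulVec]
  rw [← cvec_re, Hmat, add_mulVec, add_mulVec, dotProduct_add, dotProduct_add,
    smul_mulVec, smul_mulVec, smul_mulVec, dotProduct_smul, dotProduct_smul, dotProduct_smul,
    hstar, A1_eq, A2_form, A2_form]
  simp only [smul_eq_mul, one_mul]
  rw [← Complex.normSq_eq_conj_mul_self]
  simp only [Complex.add_re, Complex.mul_re, Complex.mul_im, Complex.conj_re, Complex.conj_im,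
    Complex.ofReal_re, Complex.ofReal_im]
  ring

lemma H_form_one {n : ℕ} (e : ℂ) (ZN ZD : Fin n → ℂ) (y : ℂ) (z : ℝ) (θ : Fin n → ℝ)
    (hd : (1 : ℂ) + ∑ i, ZD i * (θ i : ℂ) ≠ 0) :
    Sum.elim θ (fun _ : Unit => (1 : ℝ)) ⬝ᵥ ((Hmat e ZN ZD y z).map Complex.re) *ᵥ
        Sum.elim θ (fun _ : Unit => (1 : ℝ)) ≤ 0 ↔ Dissipative 0 y z (Tval e ZN ZD θ) := by
  rw [H_form, Dissipative, Tval]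
  simp only [Complex.ofReal_one, mul_one, zero_mul, zero_add]
  generalize (1 : ℂ) + ∑ i, ZD i * (θ i : ℂ) = d at *
  generalize e + ∑ i, ZN i * (θ i : ℂ) = w at *
  have hpos : 0 < Complex.normSq d := Complex.normSq_pos.2 hd
  have hw : starRingEnd ℂ d * w = (Complex.normSq d : ℂ) * (w / d) := by
    rw [Complex.normSq_eq_conj_mul_self]; field_simp
  rw [hw, mul_left_comm, Complex.re_ofReal_mul]
  constructor
  · intro h
    by_contra hc
    nlinarith [mul_pos hpos (not_le.1 hc)]
  · intro h
    nlinarith [mul_nonpos_of_nonneg_of_nonpos hpos.le h]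

open scoped MatrixOrder Matrix.Norms.L2Operator in
lemma psd_complexify {m : Type*} [Fintype m] [DecidableEq m] (M : Matrix m m ℝ)
    (h : M.PosSemidef) : (M.map (fun b => (b : ℂ))).PosSemidef := by
  obtain ⟨C, rfl⟩ := CStarAlgebra.nonneg_iff_eq_star_mul_self.1 h.nonneg
  have : (Cᴴ * C).map (fun b => (b : ℂ)) =
      (C.map (fun b => (b : ℂ)))ᴴ * C.map (fun b => (b : ℂ)) := by
    ext i j
    simp [Matrix.mul_apply]
  rw [star_eq_conjTranspose, this]
  exact posSemidef_conjTranspose_mul_self _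

lemma Bmat_symm {n : ℕ} (P : Matrix (Fin n) (Fin n) ℝ) (hP : P.PosDef)
    (θhat : Fin n → ℝ) (χ : ℝ) : (Bmat P θhat χ)ᵀ = Bmat P θhat χ := by
  have hs : (P⁻¹)ᵀ = P⁻¹ := by
    have := hP.1.inv
    rwa [IsHermitian, conjTranspose_eq_transpose_of_trivial] at this
  have hv : P⁻¹ *ᵥ θhat = θhat ᵥ* P⁻¹ := by
    conv_lhs => rw [← hs]
    rw [mulVec_transpose]
  rw [Bmat, fromBlocks_transpose, hs]
  congr 1
  · ext i j; simp [hv]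
  · ext i j; simp [hv]

/-- For `x = 0`, `T(θ)` is `{0,y,z}`-dissipative for every `θ` in the ellipsoid `U` iff
there exist `ξ ≥ 0` and a real skew-symmetric matrix `𝒳` such that the Hermitian matrix
`A₂*·y + conj(y)·A₂ + z·A₁ − ξ·B + i𝒳` is negative semidefinite. -/
theorem dissipativity_x_zero_iff_LMI {n : ℕ} (e : ℂ) (ZN ZD : Fin n → ℂ)
    (P : Matrix (Fin n) (Fin n) ℝ) (hP : P.PosDef)
    (θhat : Fin n → ℝ) (χ : ℝ) (hχ : 0 < χ)
    (hden : ∀ θ ∈ ellipsoid P θhat χ, (1 : ℂ) + ∑ i, ZD i * (θ i : ℂ) ≠ 0)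
    (y : ℂ) (z : ℝ) :
    (∀ θ ∈ ellipsoid P θhat χ, Dissipative 0 y z (Tval e ZN ZD θ)) ↔
      ∃ ξ : ℝ, 0 ≤ ξ ∧
        ∃ X : Matrix (Fin n ⊕ Unit) (Fin n ⊕ Unit) ℝ, Xᵀ = -X ∧
          (-(y • (A2mat e ZN ZD)ᴴ + starRingEnd ℂ y • A2mat e ZN ZD +
              (z : ℂ) • A1mat ZD -
              (ξ : ℂ) • (Bmat P θhat χ).map (fun b => (b : ℂ)) +
              Complex.I • X.map (fun b => (b : ℂ)))).PosSemidef := by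
  constructor
  · intro hdis
    obtain ⟨ξ, hξ, hle⟩ := slemma_aux
      (fun v : Fin n ⊕ Unit → ℝ => v ⬝ᵥ ((Hmat e ZN ZD y z).map Complex.re) *ᵥ v)
      (fun v => v ⬝ᵥ Bmat P θhat χ *ᵥ v)
      (quad_expand _) (quad_expand _) (by
        intro v hv
        obtain ⟨θ, t, rfl⟩ : ∃ θ t, v = Sum.elim θ (fun _ : Unit => t) :=
          ⟨fun i => v (Sum.inl i), v (Sum.inr ()), by ext (i | i) <;> rfl⟩
        have hv' := hv
        simp only [B_form] at hv'
        have hpsd : 0 ≤ (θ - t • θhat) ⬝ᵥ P⁻¹ *ᵥ (θ - t • θhat) := by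
          simpa using hP.inv.posSemidef.dotProduct_mulVec_nonneg (θ - t • θhat)
        have ht : t ≠ 0 := by
          rintro rfl
          simp at hv' hpsd
          linarith
        have hsc : Sum.elim θ (fun _ : Unit => t) =
            t • Sum.elim (t⁻¹ • θ) (fun _ : Unit => (1 : ℝ)) := by
          ext (i | i) <;> simp [ht]
        have hmem : t⁻¹ • θ ∈ ellipsoid P θhat χ := by
          have h2 : θ - t • θhat = t • (t⁻¹ • θ - θhat) := by
            rw [smul_sub, smul_smul, mul_inv_cancel₀ ht, one_smul]
          rw [h2, mulVec_smul, dotProduct_smul, smul_dotProduct] at hv'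
          simp only [smul_eq_mul] at hv'
          have ht2 : 0 < t ^ 2 := by positivity
          show (t⁻¹ • θ - θhat) ⬝ᵥ P⁻¹ *ᵥ (t⁻¹ • θ - θhat) < χ
          by_contra hc
          nlinarith [mul_le_mul_of_nonneg_left (not_lt.1 hc) ht2.le]
        have h3 := (H_form_one e ZN ZD y z _ (hden _ hmem)).2 (hdis _ hmem)
        show _ ≤ _
        rw [hsc, mulVec_smul, dotProduct_smul, smul_dotProduct, smul_eq_mul, smul_eq_mul,
          ← mul_assoc]
        exact mul_nonpos_of_nonneg_of_nonpos (mul_self_nonneg t) h3)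
      (Sum.elim θhat (fun _ => 1)) (by
        simp only [B_form]
        simpa using hχ)
    have hherm := Hmat_herm e ZN ZD y z
    have hij : ∀ i j, starRingEnd ℂ (Hmat e ZN ZD y z j i) = Hmat e ZN ZD y z i j := by
      intro i j
      exact congrFun (congrFun hherm i) j
    refine ⟨ξ, hξ, -(Hmat e ZN ZD y z).map Complex.im, ?_, ?_⟩
    · ext i j
      have := congrArg Complex.im (hij i j)
      simp at this ⊢
      linarith
    · have hpsd : (ξ • Bmat P θhat χ - (Hmat e ZN ZD y z).map Complex.re).PosSemidef := by
        refine PosSemidef.of_dotProduct_mulVec_nonneg ?_ ?_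
        · rw [IsHermitian, conjTranspose_eq_transpose_of_trivial, transpose_sub,
            transpose_smul, Bmat_symm P hP]
          congr 1
          ext i j
          have := congrArg Complex.re (hij i j)
          simpa using this
        · intro v
          have := hle v
          simp only [star_trivial, sub_mulVec, smul_mulVec, dotProduct_sub, dotProduct_smul,
            smul_eq_mul]
          linarith
      convert psd_complexify _ hpsd using 1
      rw [← Hmat]
      ext i j
      apply Complex.ext <;> simp
  · rintro ⟨ξ, hξ, X, hX, hpsd⟩ θ hθ
    rw [← H_form_one e ZN ZD y z θ (hden θ hθ)]
    rw [← Hmat] at hpsd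
    have h1 := hpsd.dotProduct_mulVec_nonneg (cvec (Sum.elim θ (fun _ : Unit => (1 : ℝ))))
    have hv : star (cvec (Sum.elim θ (fun _ : Unit => (1 : ℝ)))) =
        cvec (Sum.elim θ (fun _ : Unit => (1 : ℝ))) := by funext i; simp [cvec]
    rw [hv] at h1
    have h2 := (Complex.le_def.1 h1).1
    rw [cvec_re] at h2
    have h4 : ((-(Hmat e ZN ZD y z - (ξ : ℂ) • (Bmat P θhat χ).map (fun b => (b : ℂ)) +
        Complex.I • X.map (fun b => (b : ℂ)))).map Complex.re) =
        ξ • Bmat P θhat χ - (Hmat e ZN ZD y z).map Complex.re := by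
      ext i j; simp
    rw [h4, sub_mulVec, dotProduct_sub, smul_mulVec, dotProduct_smul, B_form] at h2
    have hθ' : (θ - θhat) ⬝ᵥ P⁻¹ *ᵥ (θ - θhat) < χ := hθ
    simp only [one_smul, smul_eq_mul, Complex.zero_re, one_pow, mul_one] at h2
    nlinarith [mul_nonneg hξ (sub_pos.2 hθ').le]
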